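/- arXiv:2101.06052 — 5 statements merged into one kernel-verified Lean document; each statement's English description precedes it below -/
import Mathlib

section
/- Theorem 1 (Probabilistic scaling). Let ε, δ ∈ (0,1), let r ≥ 0 and N_γ ≥ 1 be integers with r < N_γ and B(r; N_γ, ε) ≤ δ, and suppose θ_c ∈ X_ε. Assume the map w ↦ γ(X(w)) is measurable and finite for every w ∈ W. Draw N_γ independent samples w^(1), …, w^(N_γ) from Pr_W, set γ_i := γ(X(w^(i))) and γ̄ := γ_{r+1:N_γ}, the (r+1)-th smallest of the γ_i. Then there exists a Pr_W^{N_γ}-measurable set E ⊆ W^{N_γ} with Pr_W^{N_γ}(E) ≥ 1−δ such that for every sample tuple (w^(1),…,w^(N_γ)) ∈ E the inclusion θ_c ⊕ γ̄ S ⊆ X_ε holds. -/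
/-!
Write `G w` for the (real) scaling factor of `X(w)`. Since `X(w)` is closed and convex, the
supremum defining `G w`, when finite, is attained and every smaller scaling is admissible, so a positive
`γ ≤ G w` gives `θ_c ⊕ γ S ⊆ X(w)` (`mem_of_le_scalingFactor`). Hence for `γ > 0` every point of
`θ_c ⊕ γ S` has violation probability at most `Pr {G < γ}`; for `γ = 0` the only point is `θ_c`.

Let `t` be an `ε`-quantile of `G`, so that `Pr {G < t} ≤ ε ≤ Pr {G ≤ t}` (`exists_quantile`), and
let `E` be the event that at least `r + 1` of the samples satisfy `G ≤ t`. On `E` the order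
statistic is at most `t`, so its scaled set is contained in `X_ε`. The complement of `E` has
probability at most `B(r; N, p)` with `p = Pr {G ≤ t} ≥ ε` (`measure_fewHits_le`), and
`B(r; N, ·)` is antitone on `[0, 1]` (`binomCDF_antitone`), so this is at most
`B(r; N, ε) ≤ δ`. Working with the count event `E` avoids measurability of the order statistic.
-/

open MeasureTheory
open scoped ENNReal NNReal Classical

/-- Binomial cumulative distribution function `B(r; N, p)`. -/
noncomputable def binomCDF (r N : ℕ) (p : ℝ) : ℝ :=
  ∑ i ∈ Finset.range (r + 1), (N.choose i : ℝ) * p ^ i * (1 - p) ^ (N - i)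

/-- The `(r+1)`-th smallest value among `f 0, …, f (N-1)`. -/
noncomputable def orderStat {N : ℕ} (f : Fin N → ℝ) (r : ℕ) (h : r < N) : ℝ :=
  f (Tuple.sort f ⟨r, h⟩)

/-- The set `θ_c ⊕ γ S = {θ_c + γ s : s ∈ S}`. -/
def affScale {n : ℕ} (θc : Fin n → ℝ) (γ : ℝ) (S : Set (Fin n → ℝ)) : Set (Fin n → ℝ) :=
  (fun s => θc + γ • s) '' S

/-- The scaling factor of `(θ_c, S)` relative to a set `X ⊆ ℝ^{n_θ}`:
`0` if `θ_c ∉ X`, and `sup {γ ≥ 0 : θ_c ⊕ γ S ⊆ X} ∈ [0, ∞]` otherwise. -/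
noncomputable def scalingFactor {n : ℕ} (θc : Fin n → ℝ) (S : Set (Fin n → ℝ))
    (X : Set (Fin n → ℝ)) : ℝ≥0∞ :=
  if θc ∈ X then ⨆ γ ∈ {γ : ℝ≥0 | affScale θc (γ : ℝ) S ⊆ X}, (γ : ℝ≥0∞) else 0

/-- The polyhedron `X(w) = {θ : F(w) θ ≤ g(w)}` (componentwise). -/
def Xset {nw nl nθ : ℕ} (F : (Fin nw → ℝ) → Fin nl → Fin nθ → ℝ)
    (g : (Fin nw → ℝ) → Fin nl → ℝ) (w : Fin nw → ℝ) : Set (Fin nθ → ℝ) :=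
  {θ | ∀ ℓ, ∑ j, F w ℓ j * θ j ≤ g w ℓ}

/-- The violation probability `Viol(θ) = Pr_W {w : F(w) θ ≤ g(w) fails}`. -/
noncomputable def Viol {nw nl nθ : ℕ} (μ : Measure (Fin nw → ℝ))
    (F : (Fin nw → ℝ) → Fin nl → Fin nθ → ℝ) (g : (Fin nw → ℝ) → Fin nl → ℝ)
    (θ : Fin nθ → ℝ) : ℝ :=
  (μ {w | θ ∉ Xset F g w}).toReal

/-- The chance constrained set `X_ε = {θ : Viol(θ) ≤ ε}`. -/
def CCS {nw nl nθ : ℕ} (μ : Measure (Fin nw → ℝ))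
    (F : (Fin nw → ℝ) → Fin nl → Fin nθ → ℝ) (g : (Fin nw → ℝ) → Fin nl → ℝ)
    (ε : ℝ) : Set (Fin nθ → ℝ) :=
  {θ | Viol μ F g θ ≤ ε}

/-- The binomial partial sum over `i < k`; unlike `binomCDF` it includes the empty sum, which makes
the Pascal recursion uniform in `k`. -/
noncomputable def binomPartial (k N : ℕ) (p : ℝ) : ℝ :=
  ∑ i ∈ Finset.range k, (N.choose i : ℝ) * p ^ i * (1 - p) ^ (N - i)

/-- Conditioning on the outcome of one trial. -/
lemma binomPartial_succ_succ (k N : ℕ) (p : ℝ) :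
    binomPartial (k + 1) (N + 1) p =
      p * binomPartial k N p + (1 - p) * binomPartial (k + 1) N p := by
  unfold binomPartial
  rw [Finset.sum_range_succ', Finset.sum_range_succ' _ k, mul_add, Finset.mul_sum,
    Finset.mul_sum, ← add_assoc, ← Finset.sum_add_distrib]
  congr 1
  · refine Finset.sum_congr rfl fun i _ => ?_
    rw [Nat.choose_succ_succ]
    push_cast
    rcases lt_or_ge i N with h | h
    · have h2 : N - i = (N - (i + 1)) + 1 := by omega
      rw [h2]; ring
    · rw [Nat.choose_eq_zero_of_lt (Nat.lt_succ_of_le h)]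
      push_cast; ring
  · simp [pow_succ]; ring

lemma binomPartial_antitone (N : ℕ) : ∀ (k : ℕ) {p q : ℝ}, 0 ≤ p → p ≤ q → q ≤ 1 →
    binomPartial k N q ≤ binomPartial k N p := by
  induction N with
  | zero =>
    intro k p q _ _ _
    refine le_of_eq (Finset.sum_congr rfl fun i _ => ?_)
    rcases i with _ | i <;> simp
  | succ N ih =>
    intro k p q hp hpq hq
    rcases k with _ | k
    · simp [binomPartial]
    rw [binomPartial_succ_succ, binomPartial_succ_succ]
    have h1 := ih k hp hpq hq
    have h2 := ih (k + 1) hp hpq hq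
    have h3 : binomPartial k N q ≤ binomPartial (k + 1) N q := by
      unfold binomPartial
      rw [Finset.sum_range_succ]
      have : 0 ≤ 1 - q := by linarith
      have : 0 ≤ q := by linarith
      have : 0 ≤ (N.choose k : ℝ) * q ^ k * (1 - q) ^ (N - k) := by positivity
      linarith
    have h4 := mul_le_mul_of_nonneg_left h1 hp
    have h5 := mul_le_mul_of_nonneg_left h2 (show 0 ≤ 1 - p by linarith)
    have h6 := mul_le_mul_of_nonneg_left h3 (show 0 ≤ q - p by linarith)
    linarith

lemma binomCDF_antitone (r N : ℕ) {p q : ℝ} (hp : 0 ≤ p) (hpq : p ≤ q) (hq : q ≤ 1) :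
    binomCDF r N q ≤ binomCDF r N p :=
  binomPartial_antitone N (r + 1) hp hpq hq

/-- The event that exactly the indices in some set of size at most `r` hit `A`, i.e. that at most
`r` of the `N` samples lie in `A`, written as a finite union of boxes. -/
def fewHits {Ω : Type*} (A : Set Ω) (N r : ℕ) : Set (Fin N → Ω) :=
  ⋃ T ∈ (Finset.univ : Finset (Fin N)).powerset.filter (fun T => T.card ≤ r),
    Set.univ.pi fun i => if i ∈ T then A else Aᶜ

lemma measurableSet_fewHits {Ω : Type*} [MeasurableSpace Ω] {A : Set Ω} (hA : MeasurableSet A)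
    (N r : ℕ) : MeasurableSet (fewHits A N r) := by
  refine Finset.measurableSet_biUnion _ fun T _ => MeasurableSet.univ_pi fun i => ?_
  split_ifs
  exacts [hA, hA.compl]

lemma lt_card_of_notMem_fewHits {Ω : Type*} {A : Set Ω} {N r : ℕ} {ws : Fin N → Ω}
    (h : ws ∉ fewHits A N r) : r < (Finset.univ.filter fun i => ws i ∈ A).card := by
  by_contra! hc
  refine h (Set.mem_iUnion₂.2 ⟨_, Finset.mem_filter.2 ⟨by simp, hc⟩, fun i _ => ?_⟩)
  by_cases hi : ws i ∈ A <;> simp [hi]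

lemma measure_fewHits_le {Ω : Type*} [MeasurableSpace Ω] (μ : Measure Ω) [IsProbabilityMeasure μ]
    {A : Set Ω} (hA : MeasurableSet A) {N r : ℕ} (hr : r < N) :
    (Measure.pi fun _ : Fin N => μ) (fewHits A N r) ≤
      ENNReal.ofReal (binomCDF r N (μ.real A)) := by
  have hp0 : 0 ≤ μ.real A := measureReal_nonneg
  have hp1 : 0 ≤ 1 - μ.real A := sub_nonneg.2 measureReal_le_one
  have hbox : ∀ T : Finset (Fin N),
      (Measure.pi fun _ : Fin N => μ) (Set.univ.pi fun i => if i ∈ T then A else Aᶜ) =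
        ENNReal.ofReal (μ.real A ^ T.card * (1 - μ.real A) ^ (N - T.card)) := by
    intro T
    rw [Measure.pi_pi]
    have h1 : ∀ i, μ (if i ∈ T then A else Aᶜ) =
        ENNReal.ofReal (if i ∈ T then μ.real A else 1 - μ.real A) := by
      intro i
      split_ifs
      · rw [ofReal_measureReal]
      · rw [← probReal_compl_eq_one_sub hA, ofReal_measureReal]
    rw [Finset.prod_congr rfl fun i _ => h1 i, ← ENNReal.ofReal_prod_of_nonneg]
    · congr 1
      rw [Finset.prod_ite, Finset.prod_const, Finset.prod_const]
      congr 2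
      · simp
      · rw [Finset.filter_not, Finset.card_sdiff]; simp
    · intro i _; split_ifs <;> assumption
  refine (measure_biUnion_finset_le _ _).trans ?_
  rw [Finset.sum_congr rfl fun T _ => hbox T, ← ENNReal.ofReal_sum_of_nonneg
    (fun T _ => by positivity)]
  refine ENNReal.ofReal_le_ofReal (le_of_eq ?_)
  rw [Finset.sum_filter, Finset.sum_powerset_apply_card (fun m => if m ≤ r then
    μ.real A ^ m * (1 - μ.real A) ^ (N - m) else 0), Finset.card_univ, Fintype.card_fin,
    binomCDF]
  symm
  refine Finset.sum_subset_zero_on_sdiff (fun i hi => ?_) (fun i hi => ?_) (fun i hi => ?_)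
  · simp only [Finset.mem_range] at *; omega
  · simp only [Finset.mem_sdiff, Finset.mem_range] at hi
    rw [if_neg (by omega), smul_zero]
  · simp only [Finset.mem_range] at hi
    rw [if_pos (by omega), nsmul_eq_mul, mul_assoc]

lemma orderStat_le_of_lt_card {N : ℕ} (f : Fin N → ℝ) (r : ℕ) (h : r < N) (t : ℝ)
    (hc : r < (Finset.univ.filter fun i => f i ≤ t).card) : orderStat f r h ≤ t := by
  by_contra! hlt
  refine absurd hc (not_lt.2 ?_)
  -- Every index with value at most `t` sits at one of the first `r` sorted positions.
  have hsub : (Finset.univ.filter fun i => f i ≤ t) ⊆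
      (Finset.Iio (⟨r, h⟩ : Fin N)).image (Tuple.sort f) := by
    intro i hi
    refine Finset.mem_image.2 ⟨(Tuple.sort f).symm i, ?_, by simp⟩
    rw [Finset.mem_Iio]
    by_contra! hle
    have hm := Tuple.monotone_sort f hle
    simp only [Function.comp, Equiv.apply_symm_apply] at hm
    have := (Finset.mem_filter.1 hi).2
    unfold orderStat at hlt
    linarith
  calc _ ≤ _ := Finset.card_le_card hsub
    _ ≤ _ := Finset.card_image_le
    _ = r := by simp

lemma exists_quantile (ν : Measure ℝ) [IsProbabilityMeasure ν] {ε : ℝ} (h0 : 0 < ε)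
    (h1 : ε < 1) : ∃ t, ν.real (Set.Iio t) ≤ ε ∧ ε ≤ ν.real (Set.Iic t) := by
  set c := ProbabilityTheory.cdf ν with hc
  set Q := {t | ε ≤ c t} with hQ
  have hne : Q.Nonempty :=
    (((ProbabilityTheory.tendsto_cdf_atTop ν).eventually (lt_mem_nhds h1)).exists).imp
      fun t ht => le_of_lt ht
  have hbdd : BddBelow Q := by
    obtain ⟨b, hb⟩ :=
      ((ProbabilityTheory.tendsto_cdf_atBot ν).eventually (gt_mem_nhds h0)).exists
    refine ⟨b, fun t ht => ?_⟩
    by_contra! hlt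
    have h2 := c.mono hlt.le
    have h3 : ε ≤ c t := ht
    linarith
  refine ⟨sInf Q, ?_, ?_⟩
  · have h2 : Function.leftLim c (sInf Q) ≤ ε := by
      refine le_of_tendsto (c.mono.tendsto_leftLim (sInf Q)) ?_
      filter_upwards [self_mem_nhdsWithin] with t ht
      exact (not_le.1 fun h => notMem_of_lt_csInf ht hbdd h).le
    have h3 : ν (Set.Iio (sInf Q)) = ENNReal.ofReal (Function.leftLim c (sInf Q) - 0) := by
      rw [← c.measure_Iio (ProbabilityTheory.tendsto_cdf_atBot ν), ProbabilityTheory.measure_cdf]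
    rw [Measure.real, h3, sub_zero]
    exact ENNReal.toReal_le_of_le_ofReal h0.le (ENNReal.ofReal_le_ofReal h2)
  · rw [← ProbabilityTheory.cdf_eq_real]
    have hrc : Filter.Tendsto c (nhdsWithin (sInf Q) (Set.Ioi (sInf Q))) (nhds (c (sInf Q))) :=
      (c.right_continuous (sInf Q)).mono_left (nhdsWithin_mono _ Set.Ioi_subset_Ici_self)
    refine ge_of_tendsto hrc ?_
    filter_upwards [self_mem_nhdsWithin] with t ht
    obtain ⟨q, hq, hqt⟩ := (csInf_lt_iff hbdd hne).1 ht
    exact le_trans hq (c.mono hqt.le)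

/-- A finite scaling factor of a closed convex set is attained, and all smaller
positive scalings are admissible. -/
lemma mem_of_le_scalingFactor {n : ℕ} {θc : Fin n → ℝ} {S X : Set (Fin n → ℝ)}
    (hX : IsClosed X) (hconv : Convex ℝ X) {γ : ℝ} (hγ : 0 < γ)
    (hle : γ ≤ (scalingFactor θc S X).toReal) {s : Fin n → ℝ} (hs : s ∈ S) :
    θc + γ • s ∈ X := by
  have hc : θc ∈ X := by
    by_contra h
    simp only [scalingFactor, if_neg h, ENNReal.toReal_zero] at hle
    linarith
  have hlt : ∀ c ∈ Set.Ico 0 γ, θc + c • s ∈ X := by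
    intro c hcI
    have h1 : ENNReal.ofReal c < scalingFactor θc S X :=
      (ENNReal.ofReal_lt_ofReal_iff hγ).2 hcI.2 |>.trans_le (ENNReal.ofReal_le_of_le_toReal hle)
    rw [scalingFactor, if_pos hc] at h1
    obtain ⟨γ', hγ'⟩ := lt_iSup_iff.1 h1
    obtain ⟨hmem, hlt'⟩ := lt_iSup_iff.1 hγ'
    have hcg : c < (γ' : ℝ) := by
      rw [← ENNReal.ofReal_coe_nnreal] at hlt'
      exact (ENNReal.ofReal_lt_ofReal_iff_of_nonneg hcI.1).1 hlt'
    have hγpos : 0 < (γ' : ℝ) := hcI.1.trans_lt hcg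
    have hend : θc + (γ' : ℝ) • s ∈ X := hmem ⟨s, hs, rfl⟩
    have := hconv.add_smul_mem hc hend (t := c / γ')
      ⟨div_nonneg hcI.1 hγpos.le, (div_le_one hγpos).2 hcg.le⟩
    rwa [smul_smul, div_mul_cancel₀ _ hγpos.ne'] at this
  have hcl : IsClosed {c : ℝ | θc + c • s ∈ X} := hX.preimage (by fun_prop)
  have hsub : closure (Set.Ico 0 γ) ⊆ {c : ℝ | θc + c • s ∈ X} :=
    hcl.closure_subset_iff.2 hlt
  rw [closure_Ico hγ.ne] at hsub
  exact hsub ⟨hγ.le, le_rfl⟩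

lemma isClosed_Xset {nw nl nθ : ℕ} (F : (Fin nw → ℝ) → Fin nl → Fin nθ → ℝ)
    (g : (Fin nw → ℝ) → Fin nl → ℝ) (w : Fin nw → ℝ) : IsClosed (Xset F g w) := by
  simp only [Xset, Set.ofPred_forall]
  exact isClosed_iInter fun ℓ => isClosed_le (by fun_prop) continuous_const

lemma convex_Xset {nw nl nθ : ℕ} (F : (Fin nw → ℝ) → Fin nl → Fin nθ → ℝ)
    (g : (Fin nw → ℝ) → Fin nl → ℝ) (w : Fin nw → ℝ) : Convex ℝ (Xset F g w) := by
  intro x hx y hy a b ha hb hab ℓ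
  calc ∑ j, F w ℓ j * (a • x + b • y) j
      = a * ∑ j, F w ℓ j * x j + b * ∑ j, F w ℓ j * y j := by
        rw [Finset.mul_sum, Finset.mul_sum, ← Finset.sum_add_distrib]
        refine Finset.sum_congr rfl fun j _ => ?_
        simp only [Pi.add_apply, Pi.smul_apply, smul_eq_mul]; ring
    _ ≤ a * g w ℓ + b * g w ℓ :=
        add_le_add (mul_le_mul_of_nonneg_left (hx ℓ) ha) (mul_le_mul_of_nonneg_left (hy ℓ) hb)
    _ = g w ℓ := by rw [← add_mul, hab, one_mul]

/-- **Theorem 1 (Probabilistic scaling).** -/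
theorem probabilistic_scaling {nw nl nθ : ℕ}
    (F : (Fin nw → ℝ) → Fin nl → Fin nθ → ℝ) (g : (Fin nw → ℝ) → Fin nl → ℝ)
    (hF : Measurable F) (hg : Measurable g)
    (μ : Measure (Fin nw → ℝ)) [IsProbabilityMeasure μ]
    (ε δ : ℝ) (hε : ε ∈ Set.Ioo (0 : ℝ) 1) (hδ : δ ∈ Set.Ioo (0 : ℝ) 1)
    (r Nγ : ℕ) (hN1 : 1 ≤ Nγ) (hrN : r < Nγ)
    (hB : binomCDF r Nγ ε ≤ δ)
    (θc : Fin nθ → ℝ) (S : Set (Fin nθ → ℝ)) (hS : S.Nonempty)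
    (hθc : θc ∈ CCS μ F g ε)
    (hmeas : Measurable fun w => scalingFactor θc S (Xset F g w))
    (hfin : ∀ w, scalingFactor θc S (Xset F g w) ≠ ∞) :
    ∃ E : Set (Fin Nγ → (Fin nw → ℝ)),
      MeasurableSet E ∧
      ENNReal.ofReal (1 - δ) ≤ (Measure.pi fun _ => μ) E ∧
      ∀ ws ∈ E,
        affScale θc
          (orderStat (fun i => (scalingFactor θc S (Xset F g (ws i))).toReal) r hrN) S
          ⊆ CCS μ F g ε := by
  set G : (Fin nw → ℝ) → ℝ := fun w => (scalingFactor θc S (Xset F g w)).toReal with hG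
  have hGm : Measurable G := hmeas.ennreal_toReal
  have : IsProbabilityMeasure (μ.map G) := Measure.isProbabilityMeasure_map hGm.aemeasurable
  obtain ⟨t, hlo, hhi⟩ := exists_quantile (μ.map G) hε.1 hε.2
  rw [map_measureReal_apply hGm measurableSet_Iio] at hlo
  rw [map_measureReal_apply hGm measurableSet_Iic] at hhi
  have hA : MeasurableSet (G ⁻¹' Set.Iic t) := hGm measurableSet_Iic
  have hU := measurableSet_fewHits hA Nγ r
  refine ⟨(fewHits (G ⁻¹' Set.Iic t) Nγ r)ᶜ, hU.compl, ?_, ?_⟩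
  · rw [prob_compl_eq_one_sub hU, ENNReal.ofReal_sub _ hδ.1.le, ENNReal.ofReal_one]
    refine tsub_le_tsub_left ((measure_fewHits_le μ hA hrN).trans ?_) _
    exact ENNReal.ofReal_le_ofReal
      ((binomCDF_antitone r Nγ hε.1.le hhi measureReal_le_one).trans hB)
  · rintro ws hws _ ⟨s, hs, rfl⟩
    have hγt := orderStat_le_of_lt_card (fun i => G (ws i)) r hrN t
      (lt_card_of_notMem_fewHits hws)
    have hγ0 : 0 ≤ orderStat (fun i => G (ws i)) r hrN := ENNReal.toReal_nonneg
    change θc + orderStat (fun i => G (ws i)) r hrN • s ∈ CCS μ F g ε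
    set γ := orderStat (fun i => G (ws i)) r hrN
    -- `γ = 0` is separate: a violated center has scaling factor `0`, so `γ ≤ G w` says nothing.
    rcases hγ0.eq_or_lt with h0 | hpos
    · rwa [← h0, zero_smul, add_zero]
    · refine le_trans (measureReal_mono fun w hw => ?_) hlo
      by_contra hge
      exact hw (mem_of_le_scalingFactor (isClosed_Xset F g w) (convex_Xset F g w) hpos
        ((not_lt.1 hge).trans' hγt) hs)
end

section
/- Corollary 1 (Guarantee of Algorithm 1). Let ε, δ ∈ (0,1), let N_γ ≥ 1 be an integer with N_γ ≥ (7.47/ε)·ln(1/δ), and set r := ⌊ε N_γ / 2⌋. Suppose θ_c ∈ X_ε, and assume the map w ↦ γ(X(w)) is measurable and finite for every w ∈ W. Draw N_γ independent samples w^(1), …, w^(N_γ) from Pr_W, set γ_i := γ(X(w^(i))) and γ̄ := γ_{r+1:N_γ}. Then there exists a Pr_W^{N_γ}-measurable set E ⊆ W^{N_γ} with Pr_W^{N_γ}(E) ≥ 1−δ such that for every sample tuple in E the inclusion θ_c ⊕ γ̄ S ⊆ X_ε holds. -/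
/-!
Write `G w` for the scaling factor of `X(w)` and let `q` be an `ε`-quantile of `G`, that is,
`μ {G < q} ≤ ε ≤ μ {G ≤ q}` (`exists_quantile`). If
`μ {G < t}` never exceeds `ε`, no such `q` need exist, but then every sample tuple is good.

If at least `r + 1` samples satisfy `G ≤ q`, then `γ̄ ≤ q` (`orderStat_le`), so
`μ {G < γ̄} ≤ μ {G < q} ≤ ε`. Since `X(w)` is closed and convex, `θ_c + γ̄ s` lies in `X(w)` as soon
as `0 < γ̄ ≤ G w` (`mem_Xset_of_le_scalingFactor`); hence every point of `θ_c ⊕ γ̄ S` violates with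
probability at most `μ {G < γ̄} ≤ ε`. For `γ̄ = 0` the scaled set is `{θ_c}`.

The remaining event, at most `r` samples in `A = {G ≤ q}`, is a lower binomial tail with success
probability `p = μ A ≥ ε`. Markov's inequality for `(1/2)^#{i | w_i ∈ A}`, whose mean is
`(1 - p/2)^N`, bounds it by `2^r (1 - p/2)^N` (`tail_le`). This is at most
`exp (-(1 - log 2) ε N / 2)`, since `r ≤ ε N / 2`, and hence at most `δ`, because
`2 / (1 - log 2) ≈ 6.52 < 7.47` (`chernoff_numeric`).
-/

open MeasureTheory
open scoped ENNReal NNReal Classical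

/-- The discarding parameter `r = ⌊ε N_γ / 2⌋` is smaller than `N_γ`. -/
theorem floor_lt_self (ε : ℝ) (hε : ε ∈ Set.Ioo (0 : ℝ) 1) (Nγ : ℕ) (hN1 : 1 ≤ Nγ) :
    Nat.floor (ε * Nγ / 2) < Nγ := by
  obtain ⟨hε0, hε1⟩ := hε
  have hN : (1 : ℝ) ≤ (Nγ : ℝ) := by exact_mod_cast hN1
  rw [Nat.floor_lt (by positivity)]
  nlinarith

/-- For a measurable real random variable and a level `ε` exceeded by its distribution function,
there is a point `q` with `μ {G < q} ≤ ε ≤ μ {G ≤ q}`. -/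
theorem exists_quantile_s1 {Ω : Type*} [MeasurableSpace Ω] (μ : Measure Ω) [IsProbabilityMeasure μ]
    (G : Ω → ℝ) (hG : Measurable G) (h0 : ∀ w, 0 ≤ G w) (ε : ℝ) (hε : 0 < ε)
    (t₀ : ℝ) (ht₀ : ε < μ.real {w | G w < t₀}) :
    ∃ q, μ.real {w | G w < q} ≤ ε ∧ ε ≤ μ.real {w | G w ≤ q} := by
  set T : Set ℝ := {t | μ.real {w | G w < t} ≤ ε} with hT
  have hmono : ∀ {a b : ℝ}, a ≤ b → μ.real {w | G w < a} ≤ μ.real {w | G w < b} := fun hab =>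
    measureReal_mono (fun w hw => lt_of_lt_of_le hw hab)
  have hne : T.Nonempty := by
    refine ⟨0, ?_⟩
    have : {w | G w < 0} = ∅ := by
      ext w; simpa using h0 w
    simp [hT, this, hε.le]
  have hbdd : BddAbove T := by
    refine ⟨t₀, fun t ht => ?_⟩
    by_contra! h
    exact absurd (ht₀.trans_le (hmono h.le)) (not_lt.2 ht)
  refine ⟨sSup T, ?_, ?_⟩
  · obtain ⟨u, hu, hult, hulim⟩ := exists_seq_strictMono_tendsto (sSup T)
    have hset : {w | G w < sSup T} = ⋃ n, {w | G w < u n} := by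
      ext w
      simp only [Set.mem_ofPred_eq, Set.mem_iUnion]
      exact ⟨fun h => (hulim.eventually (lt_mem_nhds h)).exists,
        fun ⟨n, hn⟩ => hn.trans (hult n)⟩
    have hlim := tendsto_measure_iUnion_atTop (μ := μ) (s := fun n => {w | G w < u n})
      (fun a b hab w hw => lt_of_lt_of_le hw (hu.monotone hab))
    rw [← hset] at hlim
    have hlim' := (ENNReal.tendsto_toReal (measure_ne_top μ _)).comp hlim
    refine le_of_tendsto' hlim' fun n => ?_
    obtain ⟨t, ht, hlt⟩ := exists_lt_of_lt_csSup hne (hult n)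
    exact (hmono hlt.le).trans ht
  · obtain ⟨u, hu, hult, hulim⟩ := exists_seq_strictAnti_tendsto (sSup T)
    have hset : {w | G w ≤ sSup T} = ⋂ n, {w | G w < u n} := by
      ext w
      simp only [Set.mem_ofPred_eq, Set.mem_iInter]
      exact ⟨fun h n => h.trans_lt (hult n), fun h => ge_of_tendsto' hulim fun n => (h n).le⟩
    have hlim := tendsto_measure_iInter_atTop (μ := μ) (s := fun n => {w | G w < u n})
      (fun n => (measurableSet_lt hG measurable_const).nullMeasurableSet)
      (fun a b hab w hw => lt_of_lt_of_le hw (hu.antitone hab)) ⟨0, measure_ne_top μ _⟩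
    rw [← hset] at hlim
    have hlim' := (ENNReal.tendsto_toReal (measure_ne_top μ _)).comp hlim
    refine ge_of_tendsto' hlim' fun n => ?_
    by_contra! h
    exact absurd (le_csSup hbdd (show u n ∈ T from h.le)) (not_le.2 (hult n))

theorem orderStat_le {N : ℕ} (f : Fin N → ℝ) (r : ℕ) (h : r < N) (q : ℝ)
    (hc : r < (Finset.univ.filter fun i => f i ≤ q).card) : orderStat f r h ≤ q := by
  have key := Tuple.lt_card_le_iff_apply_le_of_monotone (j := ⟨r, h⟩) (a := q)
    (Tuple.monotone_sort f)
  refine key.1 (hc.trans_le (le_of_eq ?_))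
  refine Finset.card_bij (fun i _ => (Tuple.sort f).symm i) ?_ ?_ ?_
  · intro i hi
    simpa using hi
  · intro a _ b _ hab
    simpa using hab
  · intro b hb
    exact ⟨Tuple.sort f b, by simpa using hb, by simp⟩

/-- Closedness and convexity of the polyhedron enter here: along the ray from `θ_c` through
`θ_c + s` each constraint is affine, so it holds up to and including the supremum of the
admissible scalings. -/
theorem mem_Xset_of_le_scalingFactor {nw nl nθ : ℕ}
    (F : (Fin nw → ℝ) → Fin nl → Fin nθ → ℝ) (g : (Fin nw → ℝ) → Fin nl → ℝ)
    (w : Fin nw → ℝ) (θc : Fin nθ → ℝ) (S : Set (Fin nθ → ℝ)) (t : ℝ) (ht : 0 < t)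
    (h : ENNReal.ofReal t ≤ scalingFactor θc S (Xset F g w)) (s : Fin nθ → ℝ) (hs : s ∈ S) :
    θc + t • s ∈ Xset F g w := by
  have hpos : 0 < ENNReal.ofReal t := ENNReal.ofReal_pos.2 ht
  unfold scalingFactor at h
  split_ifs at h with hc
  swap
  · exact absurd (hpos.trans_le h) (lt_irrefl _)
  intro ℓ
  have expand : ∀ c : ℝ, ∑ j, F w ℓ j * (θc + c • s) j
      = ∑ j, F w ℓ j * θc j + c * ∑ j, F w ℓ j * s j := by
    intro c
    rw [Finset.mul_sum, ← Finset.sum_add_distrib]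
    refine Finset.sum_congr rfl fun j _ => ?_
    simp only [Pi.add_apply, Pi.smul_apply, smul_eq_mul]
    ring
  rw [expand]
  have ha := hc ℓ
  set a := ∑ j, F w ℓ j * θc j
  set b := ∑ j, F w ℓ j * s j
  by_contra! hlt
  have hb : 0 < b := by
    by_contra! hb
    nlinarith
  -- `(g - a) / b` is where the ray leaves the half-space, so it bounds every admissible scaling.
  have hsup : (⨆ γ ∈ {γ : ℝ≥0 | affScale θc (γ : ℝ) S ⊆ Xset F g w}, (γ : ℝ≥0∞))
      ≤ ENNReal.ofReal ((g w ℓ - a) / b) := by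
    refine iSup₂_le fun γ hγ => ?_
    have h1 := hγ ⟨s, hs, rfl⟩ ℓ
    rw [expand] at h1
    rw [← ENNReal.ofReal_coe_nnreal]
    refine ENNReal.ofReal_le_ofReal ?_
    rw [le_div_iff₀ hb]
    linarith
  have h2 := h.trans hsup
  have h3 : 0 ≤ (g w ℓ - a) / b := div_nonneg (by linarith) hb.le
  rw [ENNReal.ofReal_le_ofReal_iff h3, le_div_iff₀ hb] at h2
  linarith

theorem measurableSet_card_le {Ω : Type*} [MeasurableSpace Ω] (N r : ℕ) (A : Set Ω)
    (hA : MeasurableSet A) :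
    MeasurableSet {ws : Fin N → Ω | (Finset.univ.filter fun i => ws i ∈ A).card ≤ r} := by
  have : Measurable fun ws : Fin N → Ω => (Finset.univ.filter fun i => ws i ∈ A).card := by
    simp only [Finset.card_filter]
    refine Finset.measurable_sum _ fun i _ => ?_
    exact Measurable.ite (measurable_pi_apply i hA) measurable_const measurable_const
  exact measurableSet_le this measurable_const

/-- Chernoff's bound for the lower binomial tail, with the exponential base fixed at `1/2`. -/
theorem tail_le {Ω : Type*} [MeasurableSpace Ω] (μ : Measure Ω) [IsProbabilityMeasure μ]
    (N r : ℕ) (A : Set Ω) (hA : MeasurableSet A) :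
    (1 / 2 : ℝ) ^ r * (Measure.pi fun _ : Fin N => μ).real
      {ws | (Finset.univ.filter fun i => ws i ∈ A).card ≤ r} ≤ (1 - μ.real A / 2) ^ N := by
  set h : Ω → ℝ := fun w => if w ∈ A then 1 / 2 else 1 with hh
  have hhm : Measurable h := Measurable.ite hA measurable_const measurable_const
  have hh0 : ∀ w, 0 ≤ h w := fun w => by simp only [hh]; split_ifs <;> norm_num
  have hh1 : ∀ w, h w ≤ 1 := fun w => by simp only [hh]; split_ifs <;> norm_num
  have hprod : ∀ ws : Fin N → Ω,
      ∏ i, h (ws i) = (1 / 2 : ℝ) ^ (Finset.univ.filter fun i => ws i ∈ A).card := by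
    intro ws
    simp only [hh, Finset.prod_ite, Finset.prod_const, one_pow, mul_one]
  have hint : Integrable (fun ws : Fin N → Ω => ∏ i, h (ws i)) (Measure.pi fun _ => μ) := by
    refine Integrable.of_bound (C := 1) ?_ (ae_of_all _ fun ws => ?_)
    · exact (Finset.measurable_prod _ fun i _ =>
        hhm.comp (measurable_pi_apply i)).aestronglyMeasurable
    · rw [Real.norm_of_nonneg (Finset.prod_nonneg fun i _ => hh0 _)]
      exact Finset.prod_le_one (fun i _ => hh0 _) fun i _ => hh1 _
  have markov := mul_meas_ge_le_integral_of_nonneg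
    (ae_of_all _ fun ws => Finset.prod_nonneg fun i _ => hh0 (ws i)) hint ((1 / 2 : ℝ) ^ r)
  rw [integral_fintype_prod_eq_pow, Fintype.card_fin] at markov
  have hmean : ∫ w, h w ∂μ = 1 - μ.real A / 2 := by
    have : h = fun w => 1 - A.indicator (fun _ => (1 / 2 : ℝ)) w := by
      ext w
      by_cases hw : w ∈ A <;> simp [hh, hw]
      norm_num
    rw [this, integral_sub (integrable_const _) ((integrable_const _).indicator hA),
      integral_indicator_const _ hA]
    simp
    ring
  rw [hmean] at markov
  refine le_trans (mul_le_mul_of_nonneg_left (measureReal_mono ?_) (by positivity)) markov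
  intro ws hws
  simp only [Set.mem_ofPred_eq, hprod] at hws ⊢
  exact pow_le_pow_of_le_one (by norm_num) (by norm_num) hws

theorem chernoff_numeric (ε δ p : ℝ) (hε : 0 < ε) (hδ : δ ∈ Set.Ioo (0 : ℝ) 1) (N r : ℕ)
    (hN : 7.47 / ε * Real.log (1 / δ) ≤ (N : ℝ)) (hr : (r : ℝ) ≤ ε * N / 2)
    (hp : ε ≤ p) (hp1 : p ≤ 1) : (1 - p / 2) ^ N ≤ (1 / 2 : ℝ) ^ r * δ := by
  have hl2 := Real.log_two_lt_d9
  have hl2' : 0 < Real.log 2 := Real.log_pos (by norm_num)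
  have hL : 7.47 * -Real.log δ ≤ ε * N := by
    rw [one_div, Real.log_inv, div_mul_eq_mul_div, div_le_iff₀ hε] at hN
    linarith
  calc (1 - p / 2) ^ N ≤ Real.exp (-(ε / 2)) ^ N := by
        refine pow_le_pow_left₀ (by linarith) ?_ N
        have := Real.add_one_le_exp (-(ε / 2))
        linarith
    _ = Real.exp (-(ε * N / 2)) := by
        rw [← Real.exp_nat_mul]; ring_nf
    _ ≤ Real.exp (-(r * Real.log 2) + Real.log δ) := by
        refine Real.exp_le_exp.2 ?_
        have h1 : r * Real.log 2 ≤ ε * N / 2 * Real.log 2 :=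
          mul_le_mul_of_nonneg_right hr hl2'.le
        have h2 : 0 ≤ ε * N := by positivity
        nlinarith
    _ = (1 / 2 : ℝ) ^ r * δ := by
        rw [Real.exp_add, Real.exp_log hδ.1, Real.exp_neg, mul_comm (r : ℝ), Real.exp_mul,
          Real.exp_log (by norm_num : (0 : ℝ) < 2), Real.rpow_natCast]
        simp

/-- **Corollary 1 (Guarantee of Algorithm 1).** -/
theorem algorithm1_guarantee {nw nl nθ : ℕ}
    (F : (Fin nw → ℝ) → Fin nl → Fin nθ → ℝ) (g : (Fin nw → ℝ) → Fin nl → ℝ)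
    (hF : Measurable F) (hg : Measurable g)
    (μ : Measure (Fin nw → ℝ)) [IsProbabilityMeasure μ]
    (ε δ : ℝ) (hε : ε ∈ Set.Ioo (0 : ℝ) 1) (hδ : δ ∈ Set.Ioo (0 : ℝ) 1)
    (Nγ : ℕ) (hN1 : 1 ≤ Nγ)
    (hN : 7.47 / ε * Real.log (1 / δ) ≤ (Nγ : ℝ))
    (θc : Fin nθ → ℝ) (S : Set (Fin nθ → ℝ)) (hS : S.Nonempty)
    (hθc : θc ∈ CCS μ F g ε)
    (hmeas : Measurable fun w => scalingFactor θc S (Xset F g w))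
    (hfin : ∀ w, scalingFactor θc S (Xset F g w) ≠ ∞) :
    ∃ E : Set (Fin Nγ → (Fin nw → ℝ)),
      MeasurableSet E ∧
      ENNReal.ofReal (1 - δ) ≤ (Measure.pi fun _ => μ) E ∧
      ∀ ws ∈ E,
        affScale θc
          (orderStat (fun i => (scalingFactor θc S (Xset F g (ws i))).toReal)
            (Nat.floor (ε * Nγ / 2)) (floor_lt_self ε hε Nγ hN1)) S
          ⊆ CCS μ F g ε := by
  have hr : ((Nat.floor (ε * Nγ / 2) : ℕ) : ℝ) ≤ ε * Nγ / 2 :=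
    Nat.floor_le (by have := hε.1; positivity)
  have hrN := floor_lt_self ε hε Nγ hN1
  set G : (Fin nw → ℝ) → ℝ := fun w => (scalingFactor θc S (Xset F g w)).toReal with hGdef
  have hG : Measurable G := hmeas.ennreal_toReal
  have hG0 : ∀ w, 0 ≤ G w := fun w => ENNReal.toReal_nonneg
  have incl : ∀ t : ℝ, 0 ≤ t → μ.real {w | G w < t} ≤ ε → affScale θc t S ⊆ CCS μ F g ε := by
    rintro t ht0 ht _ ⟨s, hs, rfl⟩
    rcases ht0.eq_or_lt with rfl | htpos
    · simpa using hθc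
    · refine le_trans (measureReal_mono fun w hw => ?_) ht
      by_contra hlt
      refine hw (mem_Xset_of_le_scalingFactor F g w θc S t htpos ?_ s hs)
      exact (ENNReal.ofReal_le_iff_le_toReal (hfin w)).2 (not_lt.1 hlt)
  by_cases hex : ∃ t₀, ε < μ.real {w | G w < t₀}
  swap
  · push Not at hex
    refine ⟨Set.univ, MeasurableSet.univ, ?_, fun ws _ => incl _ (hG0 _) (hex _)⟩
    rw [measure_univ]
    exact ENNReal.ofReal_le_one.2 (by linarith [hδ.1])
  obtain ⟨t₀, ht₀⟩ := hex
  obtain ⟨q, hq1, hq2⟩ := exists_quantile_s1 μ G hG hG0 ε hε.1 t₀ ht₀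
  have hA : MeasurableSet {w | G w ≤ q} := measurableSet_le hG measurable_const
  have hB := measurableSet_card_le Nγ ⌊ε * Nγ / 2⌋₊ {w | G w ≤ q} hA
  have htail := (tail_le μ Nγ ⌊ε * Nγ / 2⌋₊ {w | G w ≤ q} hA).trans
    (chernoff_numeric ε δ _ hε.1 hδ Nγ _ hN hr hq2 measureReal_le_one)
  refine ⟨_, hB.compl, ?_, fun ws hws => ?_⟩
  · rw [ENNReal.ofReal_le_iff_le_toReal (measure_ne_top _ _)]
    refine le_of_le_of_eq ?_ (probReal_compl_eq_one_sub hB).symm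
    have := le_of_mul_le_mul_left htail (by positivity)
    linarith
  · have hle := orderStat_le (fun i => G (ws i)) _ hrN q (not_le.1 hws)
    refine incl _ (hG0 _) (le_trans (measureReal_mono fun w hw => ?_) hq1)
    exact lt_of_lt_of_le hw hle
end

section
/- Scalar order-statistic core of the probabilistic scaling result: let μ be a Borel probability measure on ℝ, let ε ∈ (0,1), and let 0 ≤ r < N be integers. Draw N independent samples x_1, …, x_N from μ and let x̄ := x_{r+1:N} be the (r+1)-th smallest sample. Then the probability, with respect to the product measure μ^N, of the event { (x_1,…,x_N) : μ{ y ∈ ℝ : y < x̄ } > ε } is at most B(r; N, ε). -/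
/-!
Call `t` *high* if `ε < μ (Iio t)`, and let `A` be the set of points that are not high. The high
points form an upper set `S`, and right-continuity of the distribution function at `inf S` gives
`ε ≤ μ A` (`le_measureReal_compl_setOf_lt_measure_Iio`). If the `(r+1)`-th smallest sample is high,
then every sample lying in `A` is strictly below it, so at most `r` samples lie in `A`
(`card_notMem_le_of_orderStat_mem`). The number of samples in `A` is binomial with parameters `N`
and `p = μ A`, so the probability of the event is at most `binomCDF r N p`
(`pi_card_le_le_binomCDF`). Finally `binomCDF r N` is antitone on `[0, 1]` (`binomSum_anti`), and
`ε ≤ p`.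
-/

open MeasureTheory
open scoped ENNReal

/-- The binomial probability of fewer than `m` successes in `N` trials. Indexing by a strict bound
makes the Pascal-type recursion `binomSum_succ_succ` hold without a boundary case at zero. -/
noncomputable def binomSum (m N : ℕ) (p : ℝ) : ℝ :=
  ∑ i ∈ Finset.range m, (N.choose i : ℝ) * p ^ i * (1 - p) ^ (N - i)

/-- Conditioning on the outcome of one trial. -/
lemma binomSum_succ_succ (m N : ℕ) (p : ℝ) :
    binomSum (m + 1) (N + 1) p = (1 - p) * binomSum (m + 1) N p + p * binomSum m N p := by
  induction m with
  | zero => simp [binomSum, pow_succ, mul_comm]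
  | succ m ih =>
    have step : ∀ k M, binomSum (k + 1) M p
        = binomSum k M p + (M.choose k : ℝ) * p ^ k * (1 - p) ^ (M - k) :=
      fun k M => Finset.sum_range_succ _ _
    rw [step (m + 1) (N + 1), ih, step (m + 1) N, step m N, Nat.choose_succ_succ,
      Nat.add_sub_add_right]
    rcases lt_or_ge m N with h | h
    · obtain ⟨d, rfl⟩ := Nat.exists_eq_add_of_lt h
      have h1 : m + d + 1 - m = d + 1 := by omega
      have h2 : m + d + 1 - (m + 1) = d := by omega
      rw [h1, h2]
      push_cast
      ring
    · rw [Nat.choose_eq_zero_of_lt (Nat.lt_succ_of_le h)]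
      push_cast
      ring

lemma binomSum_mono_left {m n : ℕ} (h : m ≤ n) (N : ℕ) {p : ℝ} (h0 : 0 ≤ p) (h1 : p ≤ 1) :
    binomSum m N p ≤ binomSum n N p := by
  have : 0 ≤ 1 - p := by linarith
  refine Finset.sum_le_sum_of_subset_of_nonneg (Finset.range_mono h) fun i _ _ => ?_
  positivity

lemma binomSum_anti (N m : ℕ) {p q : ℝ} (h0 : 0 ≤ p) (hpq : p ≤ q) (h1 : q ≤ 1) :
    binomSum m N q ≤ binomSum m N p := by
  induction N generalizing m with
  | zero =>
    refine le_of_eq (Finset.sum_congr rfl fun i _ => ?_)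
    cases i <;> simp
  | succ N ih =>
    cases m with
    | zero => simp [binomSum]
    | succ m =>
      rw [binomSum_succ_succ, binomSum_succ_succ]
      have hm := binomSum_mono_left (Nat.le_succ m) N h0 (hpq.trans h1)
      nlinarith [mul_le_mul_of_nonneg_left (ih (m + 1)) (sub_nonneg.2 h1),
        mul_le_mul_of_nonneg_left (ih m) (h0.trans hpq),
        mul_nonneg (sub_nonneg.2 hpq) (sub_nonneg.2 hm)]

open Classical in
/-- The number of samples falling in a measurable set `A` is binomial, with parameter `μ A`. Only the
upper bound is needed, so subadditivity over the possible sets of indices replaces additivity. -/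
lemma pi_card_le_le_binomCDF (μ : Measure ℝ) [IsProbabilityMeasure μ] {A : Set ℝ}
    (hA : MeasurableSet A) (r N : ℕ) :
    (Measure.pi fun _ : Fin N => μ)
        {x : Fin N → ℝ | (Finset.univ.filter fun i => x i ∈ A).card ≤ r}
      ≤ ENNReal.ofReal (binomCDF r N (μ.real A)) := by
  have hp0 : 0 ≤ μ.real A := measureReal_nonneg
  have hp1 : 0 ≤ 1 - μ.real A := sub_nonneg.2 measureReal_le_one
  -- Split according to the exact set `s` of indices whose sample lies in `A`.
  have hsub : {x : Fin N → ℝ | (Finset.univ.filter fun i => x i ∈ A).card ≤ r} ⊆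
      ⋃ s ∈ Finset.univ.filter (fun s : Finset (Fin N) => s.card ≤ r),
        Set.pi Set.univ fun i => if i ∈ s then A else Aᶜ := by
    intro x hx
    simp only [Set.mem_iUnion]
    refine ⟨Finset.univ.filter fun i => x i ∈ A, by simpa using hx, fun i _ => ?_⟩
    by_cases h : x i ∈ A <;> simp [h]
  refine (measure_mono hsub).trans ((measure_biUnion_finset_le _ _).trans ?_)
  have hs : ∀ s : Finset (Fin N), (Measure.pi fun _ : Fin N => μ)
      (Set.pi Set.univ fun i => if i ∈ s then A else Aᶜ)
      = ENNReal.ofReal (μ.real A ^ s.card * (1 - μ.real A) ^ (N - s.card)) := by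
    intro s
    rw [Measure.pi_pi]
    have : ∀ i, μ (if i ∈ s then A else Aᶜ)
        = ENNReal.ofReal (if i ∈ s then μ.real A else 1 - μ.real A) := by
      intro i
      split_ifs
      · simp
      · rw [← probReal_compl_eq_one_sub hA]; simp
    simp_rw [this]
    rw [← ENNReal.ofReal_prod_of_nonneg (fun i _ => by split_ifs <;> assumption),
      Finset.prod_ite]
    simp [Finset.filter_not, Finset.card_sdiff]
  simp_rw [hs]
  rw [← ENNReal.ofReal_sum_of_nonneg (fun i _ => by positivity)]
  refine ENNReal.ofReal_le_ofReal (le_of_eq ?_)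
  rw [← Finset.sum_fiberwise_of_maps_to (g := Finset.card) (t := Finset.range (r + 1))
    (fun s hs => by simpa [Nat.lt_succ_iff] using hs)]
  refine Finset.sum_congr rfl fun k hk => ?_
  have hk' : k ≤ r := Nat.lt_succ_iff.1 (Finset.mem_range.1 hk)
  have hf : (Finset.univ.filter (fun s : Finset (Fin N) => s.card ≤ r)).filter
      (fun s => s.card = k) = Finset.powersetCard k Finset.univ := by
    ext s
    simp only [Finset.mem_filter, Finset.mem_univ, true_and, Finset.mem_powersetCard_univ]
    omega
  rw [hf, Finset.sum_congr rfl fun s hs => by rw [Finset.mem_powersetCard_univ.1 hs]]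
  simp [mul_assoc]

open Classical in
/-- A sample outside the upper set `S` is strictly below the order statistic in `S`, so its rank is
among the first `r`. -/
lemma card_notMem_le_of_orderStat_mem {N : ℕ} (x : Fin N → ℝ) {r : ℕ} (h : r < N) {S : Set ℝ}
    (hS : IsUpperSet S) (hx : orderStat x r h ∈ S) :
    (Finset.univ.filter fun i => x i ∈ Sᶜ).card ≤ r := by
  have hsub : (Finset.univ.filter fun i => x i ∈ Sᶜ)
      ⊆ (Finset.Iio (⟨r, h⟩ : Fin N)).image (Tuple.sort x) := by
    intro i hi
    refine Finset.mem_image.2 ⟨(Tuple.sort x).symm i, Finset.mem_Iio.2 ?_, by simp⟩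
    by_contra! hle
    have hmono := Tuple.monotone_sort x hle
    simp only [Function.comp_apply, Equiv.apply_symm_apply] at hmono
    exact (Finset.mem_filter.1 hi).2 (hS hmono hx)
  simpa using (Finset.card_le_card hsub).trans Finset.card_image_le

lemma isUpperSet_lt_measure_Iio (μ : Measure ℝ) (a : ℝ≥0∞) :
    IsUpperSet {t : ℝ | a < μ (Set.Iio t)} :=
  fun _ _ hst hs => lt_of_lt_of_le hs (measure_mono (Set.Iio_subset_Iio hst))

/-- Let `S` be the set of `t` with `ε < μ (Iio t)`. If `S` is empty, its complement has measure one.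
If the upper set `S` contains its infimum `q`, its complement is `Iio q`, and the bound is the
definition of `q ∈ S`. Otherwise the complement is `Iic q`, and the bound is the limit from the right
of the distribution function at `q`. -/
lemma le_measureReal_compl_setOf_lt_measure_Iio (μ : Measure ℝ) [IsProbabilityMeasure μ] {ε : ℝ}
    (hε : ε ∈ Set.Ioo (0 : ℝ) 1) :
    ε ≤ μ.real {t : ℝ | ENNReal.ofReal ε < μ (Set.Iio t)}ᶜ := by
  set S := {t : ℝ | ENNReal.ofReal ε < μ (Set.Iio t)} with hSdef
  have hup : IsUpperSet S := isUpperSet_lt_measure_Iio μ _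
  have hS : ∀ t ∈ S, ε < μ.real (Set.Iio t) := fun t ht =>
    (ENNReal.ofReal_lt_iff_lt_toReal hε.1.le (measure_ne_top _ _)).1 ht
  have hcdf : ∀ t ∈ S, ε ≤ ProbabilityTheory.cdf μ t := fun t ht => by
    rw [ProbabilityTheory.cdf_eq_real]
    exact (hS t ht).le.trans (measureReal_mono Set.Iio_subset_Iic_self)
  rcases S.eq_empty_or_nonempty with he | hne
  · simp [he, hε.2.le]
  have hbdd : BddBelow S := by
    -- The distribution function tends to `0 < ε` at `-∞`.
    obtain ⟨b, hb⟩ :=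
      ((ProbabilityTheory.tendsto_cdf_atBot μ).eventually (gt_mem_nhds hε.1)).exists
    refine ⟨b, fun t ht => ?_⟩
    by_contra! hlt
    exact absurd (hcdf b (hup hlt.le ht)) (not_le.2 hb)
  by_cases hq : sInf S ∈ S
  · exact (hS _ hq).le.trans
      (measureReal_mono fun t ht hts => absurd (csInf_le hbdd hts) (not_le.2 ht))
  · have hright : ε ≤ ProbabilityTheory.cdf μ (sInf S) := by
      have hc := ((ProbabilityTheory.cdf μ).right_continuous (sInf S)).mono
        (Set.Ioi_subset_Ici_self)
      refine ge_of_tendsto hc (Filter.eventually_of_mem self_mem_nhdsWithin fun t ht => ?_)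
      obtain ⟨s, hs, hst⟩ := (csInf_lt_iff hbdd hne).1 ht
      exact hcdf t (hup hst.le hs)
    rw [ProbabilityTheory.cdf_eq_real] at hright
    refine hright.trans (measureReal_mono fun t ht hts => hq ?_)
    rwa [le_antisymm (csInf_le hbdd hts) ht]

/-- **Scalar order-statistic core of the probabilistic scaling result.** -/
theorem order_statistic_core (μ : Measure ℝ) [IsProbabilityMeasure μ]
    (ε : ℝ) (hε : ε ∈ Set.Ioo (0 : ℝ) 1) (r N : ℕ) (hrN : r < N) :
    (Measure.pi fun _ : Fin N => μ)
        {x : Fin N → ℝ | ENNReal.ofReal ε < μ (Set.Iio (orderStat x r hrN))}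
      ≤ ENNReal.ofReal (binomCDF r N ε) := by
  classical
  have hup := isUpperSet_lt_measure_Iio μ (ENNReal.ofReal ε)
  have hmeas : MeasurableSet {t : ℝ | ENNReal.ofReal ε < μ (Set.Iio t)}ᶜ :=
    hup.ordConnected.measurableSet.compl
  refine (measure_mono fun x hx => ?_).trans ((pi_card_le_le_binomCDF μ hmeas r N).trans
    (ENNReal.ofReal_le_ofReal (binomSum_anti N (r + 1) hε.1.le
      (le_measureReal_compl_setOf_lt_measure_Iio μ hε) measureReal_le_one)))
  rw [Set.mem_ofPred_eq]
  convert card_notMem_le_of_orderStat_mem x hrN hup hx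
end

section
/- Sample-size bound for Algorithm 1: let ε, δ ∈ (0,1) and let N ≥ 1 be an integer with N ≥ (7.47/ε)·ln(1/δ). Set r := ⌊εN/2⌋. Then B(r; N, ε) ≤ δ. -/
/-- Chernoff bound for the lower tail, with the moment generating function evaluated at
`-log 2`. -/
lemma binomCDF_le_tilt (r N : ℕ) (p : ℝ) (hp0 : 0 ≤ p) (hp1 : p ≤ 1) (hr : r ≤ N) :
    binomCDF r N p ≤ 2 ^ r * (1 - p / 2) ^ N := by
  have hq : 0 ≤ 1 - p := by linarith
  have hbinom : (1 - p / 2) ^ N =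
      ∑ i ∈ Finset.range (N + 1), (p / 2) ^ i * (1 - p) ^ (N - i) * (N.choose i : ℝ) := by
    rw [← add_pow]
    congr 1
    ring
  rw [hbinom, Finset.mul_sum, binomCDF]
  calc ∑ i ∈ Finset.range (r + 1), (N.choose i : ℝ) * p ^ i * (1 - p) ^ (N - i)
      ≤ ∑ i ∈ Finset.range (r + 1),
          2 ^ r * ((p / 2) ^ i * (1 - p) ^ (N - i) * (N.choose i : ℝ)) := by
        refine Finset.sum_le_sum fun i hi => ?_
        have hir : i ≤ r := Nat.lt_succ_iff.mp (Finset.mem_range.mp hi)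
        have hpow : (2 : ℝ) ^ i ≤ 2 ^ r := pow_le_pow_right₀ one_le_two hir
        have hsplit : p ^ i = 2 ^ i * (p / 2) ^ i := by
          rw [← mul_pow]
          congr 1
          ring
        calc (N.choose i : ℝ) * p ^ i * (1 - p) ^ (N - i)
            = 2 ^ i * ((p / 2) ^ i * (1 - p) ^ (N - i) * (N.choose i : ℝ)) := by
              rw [hsplit]
              ring
          _ ≤ _ := mul_le_mul_of_nonneg_right hpow (by positivity)
    _ ≤ _ := by
        refine Finset.sum_le_sum_of_subset_of_nonneg
          (Finset.range_mono (by omega)) fun i _ _ => ?_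
        positivity

/-- **Sample-size bound for Algorithm 1:** if `N ≥ (7.47/ε)·ln(1/δ)` and
`r = ⌊εN/2⌋`, then `B(r; N, ε) ≤ δ`. -/
theorem sample_size_bound (ε δ : ℝ) (hε : ε ∈ Set.Ioo (0 : ℝ) 1)
    (hδ : δ ∈ Set.Ioo (0 : ℝ) 1) (N : ℕ) (hN1 : 1 ≤ N)
    (hN : 7.47 / ε * Real.log (1 / δ) ≤ (N : ℝ)) :
    binomCDF (Nat.floor (ε * N / 2)) N ε ≤ δ := by
  obtain ⟨hε0, hε1⟩ := hε
  obtain ⟨hδ0, hδ1⟩ := hδ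
  have hεN : 0 ≤ ε * N := by positivity
  have hNε : ε * N ≤ N := mul_le_of_le_one_left (Nat.cast_nonneg N) hε1.le
  set r := Nat.floor (ε * N / 2) with hrdef
  have hr : (r : ℝ) ≤ ε * N / 2 := Nat.floor_le (by positivity)
  have hrN : r ≤ N := by
    have : (r : ℝ) ≤ N := by linarith
    exact_mod_cast this
  have htwo : (2 : ℝ) ^ r ≤ Real.exp (ε * N / 2 * Real.log 2) := by
    calc (2 : ℝ) ^ r = Real.exp (r * Real.log 2) := by
          rw [Real.exp_nat_mul, Real.exp_log two_pos]
      _ ≤ _ := Real.exp_le_exp.mpr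
          (mul_le_mul_of_nonneg_right hr (Real.log_nonneg one_le_two))
  have hone : (1 - ε / 2) ^ N ≤ Real.exp (-(ε * N / 2)) := by
    calc (1 - ε / 2) ^ N ≤ Real.exp (-(ε / 2)) ^ N :=
          pow_le_pow_left₀ (by linarith) (Real.one_sub_le_exp_neg _) N
      _ = _ := by
          rw [← Real.exp_nat_mul]
          congr 1
          ring
  have hlog : -Real.log δ * 7.47 ≤ ε * N := by
    rw [one_div, Real.log_inv, div_mul_eq_mul_div, div_le_iff₀ hε0] at hN
    linarith
  have hexp : ε * N / 2 * Real.log 2 + -(ε * N / 2) ≤ Real.log δ := by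
    -- `7.47 * (1 - log 2) / 2 > 1`
    have h := mul_le_mul_of_nonneg_left Real.log_two_lt_d9.le hεN
    linarith
  calc binomCDF r N ε ≤ 2 ^ r * (1 - ε / 2) ^ N :=
        binomCDF_le_tilt r N ε hε0.le hε1.le hrN
    _ ≤ Real.exp (ε * N / 2 * Real.log 2) * Real.exp (-(ε * N / 2)) :=
        mul_le_mul htwo hone (pow_nonneg (by linarith) N) (Real.exp_pos _).le
    _ = Real.exp (ε * N / 2 * Real.log 2 + -(ε * N / 2)) := (Real.exp_add _ _).symm
    _ ≤ Real.exp (Real.log δ) := Real.exp_le_exp.mpr hexp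
    _ = δ := Real.exp_log hδ0
end

section
/- Theorem 2, main case (scaling factor for norm-based SAS): let p, p* ∈ [1,∞] be conjugate exponents (1/p + 1/p* = 1), let H ∈ ℝ^{n_θ×s}, θ_c ∈ ℝ^{n_θ}, and for ℓ = 1,…,L let f_ℓ ∈ ℝ^{n_θ}, g_ℓ ∈ ℝ. Set τ_ℓ := g_ℓ − f_ℓᵀθ_c and ρ_ℓ := ‖Hᵀ f_ℓ‖_{p*}, and let X := {θ ∈ ℝ^{n_θ} : f_ℓᵀθ ≤ g_ℓ for all ℓ}. If τ_ℓ ≥ 0 and ρ_ℓ > 0 for every ℓ, then for every real γ ≥ 0 one has θ_c ⊕ γ H B_p^s ⊆ X if and only if γ ≤ min_{ℓ=1,…,L} τ_ℓ/ρ_ℓ; in particular, the maximum of {γ ≥ 0 : θ_c ⊕ γ H B_p^s ⊆ X} is attained and equals min_{ℓ} τ_ℓ/ρ_ℓ. -/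
/-!
The inclusion holds iff every half-space constraint holds on the whole set. Since
`f ⬝ᵥ (θc + γ • H z) = f ⬝ᵥ θc + γ * (Hᵀ f ⬝ᵥ z)`, the `ℓ`-th constraint says that `γ` times the
maximum of `z ↦ Hᵀ f ⬝ᵥ z` over the unit ball of `ℓ_p` is at most `τ ℓ`. By Hölder's inequality
together with its equality case (`isGreatest_dotProduct_ball`) that maximum is the dual norm
`ρ ℓ = ‖Hᵀ f‖_q`, so the constraint reads `γ * ρ ℓ ≤ τ ℓ`, i.e. `γ ≤ τ ℓ / ρ ℓ`.
The duality is proved separately for `p = ∞`, for `p = 1` and for `1 < p < ∞`.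
-/

open Matrix
open scoped ENNReal

/-- The `ℓ_p` norm on `ℝ^s`, for `p ∈ [0,∞]`. -/
noncomputable def lpNorm (p : ℝ≥0∞) {s : ℕ} (z : Fin s → ℝ) : ℝ :=
  ‖(WithLp.equiv p (Fin s → ℝ)).symm z‖

lemma lpNorm_top {s : ℕ} (z : Fin s → ℝ) : lpNorm ∞ z = ‖z‖ :=
  PiLp.norm_toLp z

lemma lpNorm_one {s : ℕ} (z : Fin s → ℝ) : lpNorm 1 z = ∑ i, |z i| := by
  have h := PiLp.norm_eq_sum (p := 1) (by simp) (WithLp.toLp 1 z)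
  simpa [lpNorm] using h

lemma lpNorm_of_toReal_pos {p : ℝ≥0∞} (hp : 0 < p.toReal) {s : ℕ} (z : Fin s → ℝ) :
    lpNorm p z = (∑ i, |z i| ^ p.toReal) ^ (1 / p.toReal) :=
  PiLp.norm_eq_sum hp (WithLp.toLp p z)

lemma isGreatest_dotProduct_ball_top {s : ℕ} (w : Fin s → ℝ) :
    IsGreatest ((fun z => w ⬝ᵥ z) '' {z | lpNorm ∞ z ≤ 1}) (lpNorm 1 w) := by
  simp only [lpNorm_top, lpNorm_one]
  constructor
  · -- The sign vector of `w` attains the `ℓ_1` norm.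
    refine ⟨fun i => (SignType.sign (w i) : ℝ), ?_, ?_⟩
    · refine (pi_norm_le_iff_of_nonneg zero_le_one).2 fun i => ?_
      rcases lt_trichotomy (w i) 0 with h | h | h <;> simp [h]
    · exact Finset.sum_congr rfl fun i _ => self_mul_sign (w i)
  · rintro _ ⟨z, hz, rfl⟩
    refine Finset.sum_le_sum fun i _ => ?_
    have hi : |z i| ≤ 1 := (norm_le_pi_norm z i).trans hz
    calc w i * z i ≤ |w i * z i| := le_abs_self _
      _ = |w i| * |z i| := abs_mul _ _
      _ ≤ |w i| := mul_le_of_le_one_right (abs_nonneg _) hi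

lemma isGreatest_dotProduct_ball_one {s : ℕ} (w : Fin s → ℝ) :
    IsGreatest ((fun z => w ⬝ᵥ z) '' {z | lpNorm 1 z ≤ 1}) (lpNorm ∞ w) := by
  simp only [lpNorm_top, lpNorm_one]
  constructor
  · rcases isEmpty_or_nonempty (Fin s) with hs | hs
    · exact ⟨0, by simp, by simp [Subsingleton.elim w 0]⟩
    · -- A signed basis vector at a coordinate of largest modulus attains the sup norm.
      obtain ⟨i, hi⟩ := Finite.exists_max fun i => ‖w i‖
      have hw : ‖w‖ = |w i| :=
        le_antisymm ((pi_norm_le_iff_of_nonneg (norm_nonneg _)).2 hi) (norm_le_pi_norm w i)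
      refine ⟨Pi.single i (SignType.sign (w i) : ℝ), ?_, ?_⟩
      · have h : ∑ j, |(Pi.single i (SignType.sign (w i) : ℝ) : Fin s → ℝ) j|
            = |(SignType.sign (w i) : ℝ)| := by
          rw [Finset.sum_eq_single i] <;> simp +contextual
        rw [Set.mem_ofPred_eq, h]
        rcases lt_trichotomy (w i) 0 with h | h | h <;> simp [h]
      · simp [hw, self_mul_sign]
  · rintro _ ⟨z, hz, rfl⟩
    calc w ⬝ᵥ z ≤ ∑ i, ‖w‖ * |z i| := Finset.sum_le_sum fun i _ => by
          calc w i * z i ≤ |w i * z i| := le_abs_self _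
            _ = |w i| * |z i| := abs_mul _ _
            _ ≤ ‖w‖ * |z i| := by gcongr; exact norm_le_pi_norm w i
      _ = ‖w‖ * ∑ i, |z i| := by rw [Finset.mul_sum]
      _ ≤ ‖w‖ := mul_le_of_le_one_right (norm_nonneg _) hz

lemma isGreatest_dotProduct_ball_of_toReal {p q : ℝ≥0∞}
    (hpq : q.toReal.HolderConjugate p.toReal) {s : ℕ} (w : Fin s → ℝ) :
    IsGreatest ((fun z => w ⬝ᵥ z) '' {z | lpNorm p z ≤ 1}) (lpNorm q w) := by
  have hp := hpq.symm.pos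
  have hq := hpq.pos
  simp only [lpNorm_of_toReal_pos hp, lpNorm_of_toReal_pos hq]
  constructor
  · -- Take a nonnegative maximiser for `|w|` and restore the signs of `w`.
    obtain ⟨v, hv, hvw⟩ := (NNReal.isGreatest_Lp Finset.univ (fun i => ‖w i‖₊) hpq).1
    refine ⟨fun i => (SignType.sign (w i) : ℝ) * v i, ?_, ?_⟩
    · have hv' : ∑ i, (v i : ℝ) ^ p.toReal ≤ 1 := by exact_mod_cast hv
      refine Real.rpow_le_one (Finset.sum_nonneg fun i _ => by positivity)
        (le_trans (Finset.sum_le_sum fun i _ => ?_) hv') (by positivity)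
      refine Real.rpow_le_rpow (abs_nonneg _) ?_ hp.le
      rw [abs_mul, NNReal.abs_eq]
      refine mul_le_of_le_one_left (v i).2 ?_
      rcases lt_trichotomy (w i) 0 with h | h | h <;> simp [h]
    · have h := congrArg NNReal.toReal hvw
      push_cast at h
      simp only [Real.norm_eq_abs] at h
      rw [← h]
      refine Finset.sum_congr rfl fun i _ => ?_
      rw [← mul_assoc, self_mul_sign]
  · rintro _ ⟨z, hz, rfl⟩
    refine (Real.inner_le_Lp_mul_Lq Finset.univ w z hpq).trans ?_
    exact mul_le_of_le_one_right (by positivity) hz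

/-- Duality of `ℓ_p` and `ℓ_q`: Hölder's inequality together with its equality case. -/
lemma isGreatest_dotProduct_ball {p q : ℝ≥0∞} (hp : 1 ≤ p) (hq : 1 ≤ q)
    (hpq : 1 / p + 1 / q = 1) {s : ℕ} (w : Fin s → ℝ) :
    IsGreatest ((fun z => w ⬝ᵥ z) '' {z | lpNorm p z ≤ 1}) (lpNorm q w) := by
  rcases eq_or_ne p ∞ with rfl | hp'
  · obtain rfl : q = 1 := by simpa using hpq
    exact isGreatest_dotProduct_ball_top w
  rcases eq_or_ne q ∞ with rfl | hq'
  · obtain rfl : p = 1 := by simpa using hpq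
    exact isGreatest_dotProduct_ball_one w
  have hp0 : 0 < p.toReal := ENNReal.toReal_pos (by positivity) hp'
  have hq0 : 0 < q.toReal := ENNReal.toReal_pos (by positivity) hq'
  have hsum : p.toReal⁻¹ + q.toReal⁻¹ = 1 := by
    have h := congrArg ENNReal.toReal hpq
    rw [ENNReal.toReal_add (by simp; positivity) (by simp; positivity)] at h
    simpa using h
  refine isGreatest_dotProduct_ball_of_toReal (Real.holderConjugate_iff.2 ⟨?_, by linarith⟩) w
  have : 0 < p.toReal⁻¹ := inv_pos.2 hp0
  exact (inv_lt_one₀ hq0).1 (by linarith)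

/-- **Theorem 2, main case (scaling factor for norm-based SAS).** -/
theorem scaling_factor_norm_based_main
    (p q : ℝ≥0∞) (hp : 1 ≤ p) (hq : 1 ≤ q) (hpq : 1 / p + 1 / q = 1)
    {nθ s L : ℕ} (hL : 0 < L)
    (H : Matrix (Fin nθ) (Fin s) ℝ) (θc : Fin nθ → ℝ)
    (f : Fin L → Fin nθ → ℝ) (g : Fin L → ℝ)
    (hτ : ∀ ℓ, 0 ≤ g ℓ - f ℓ ⬝ᵥ θc)
    (hρ : ∀ ℓ, 0 < lpNorm q (H.transpose.mulVec (f ℓ))) :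
    (∀ γ : ℝ, 0 ≤ γ →
      ((fun z => θc + γ • H.mulVec z) '' {z | lpNorm p z ≤ 1}
          ⊆ {θ : Fin nθ → ℝ | ∀ ℓ, f ℓ ⬝ᵥ θ ≤ g ℓ} ↔
        γ ≤ Finset.univ.inf'
          (Finset.univ_nonempty_iff.mpr (Fin.pos_iff_nonempty.mp hL))
          fun ℓ => (g ℓ - f ℓ ⬝ᵥ θc) / lpNorm q (H.transpose.mulVec (f ℓ)))) ∧
    IsGreatest
      {γ : ℝ | 0 ≤ γ ∧ (fun z => θc + γ • H.mulVec z) '' {z | lpNorm p z ≤ 1}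
          ⊆ {θ : Fin nθ → ℝ | ∀ ℓ, f ℓ ⬝ᵥ θ ≤ g ℓ}}
      (Finset.univ.inf'
        (Finset.univ_nonempty_iff.mpr (Fin.pos_iff_nonempty.mp hL))
        fun ℓ => (g ℓ - f ℓ ⬝ᵥ θc) / lpNorm q (H.transpose.mulVec (f ℓ))) := by
  have key : ∀ γ : ℝ, 0 ≤ γ →
      ((fun z => θc + γ • H.mulVec z) '' {z | lpNorm p z ≤ 1}
          ⊆ {θ : Fin nθ → ℝ | ∀ ℓ, f ℓ ⬝ᵥ θ ≤ g ℓ} ↔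
        γ ≤ Finset.univ.inf'
          (Finset.univ_nonempty_iff.mpr (Fin.pos_iff_nonempty.mp hL))
          fun ℓ => (g ℓ - f ℓ ⬝ᵥ θc) / lpNorm q (H.transpose.mulVec (f ℓ))) := by
    intro γ hγ
    have hdot : ∀ ℓ z, f ℓ ⬝ᵥ (θc + γ • H.mulVec z)
        = f ℓ ⬝ᵥ θc + γ * (H.transpose.mulVec (f ℓ) ⬝ᵥ z) := by
      intro ℓ z
      rw [dotProduct_add, dotProduct_smul, dotProduct_mulVec, mulVec_transpose, smul_eq_mul]
    simp only [Finset.le_inf'_iff, Finset.mem_univ, true_implies, le_div_iff₀ (hρ _)]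
    constructor
    · intro h ℓ
      obtain ⟨z, hz, hzw⟩ := (isGreatest_dotProduct_ball hp hq hpq (H.transpose.mulVec (f ℓ))).1
      have h1 := h ⟨z, hz, rfl⟩ ℓ
      have h2 := hdot ℓ z
      simp only at h1 hzw
      rw [hzw] at h2
      linarith
    · rintro h _ ⟨z, hz, rfl⟩ ℓ
      have h1 := (isGreatest_dotProduct_ball hp hq hpq (H.transpose.mulVec (f ℓ))).2 ⟨z, hz, rfl⟩
      have h2 := mul_le_mul_of_nonneg_left h1 hγ
      have h3 := h ℓ
      simp only at h2 ⊢
      rw [hdot]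
      linarith
  have hnonneg : 0 ≤ Finset.univ.inf'
      (Finset.univ_nonempty_iff.mpr (Fin.pos_iff_nonempty.mp hL))
      fun ℓ => (g ℓ - f ℓ ⬝ᵥ θc) / lpNorm q (H.transpose.mulVec (f ℓ)) :=
    (Finset.le_inf'_iff _ _).2 fun ℓ _ => div_nonneg (hτ ℓ) (hρ ℓ).le
  exact ⟨key, ⟨hnonneg, (key _ hnonneg).2 le_rfl⟩, fun γ hγ => (key γ hγ.1).1 hγ.2⟩
end
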